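/- arXiv:1401.7498 — 3 statements merged into one kernel-verified Lean document; each statement's English description precedes it below -/
import Mathlib

section
/- Let E₁, E₂ be nontrivial word equations on n unknowns such that the set of solutions of E₁ of rank n − 1 is different from the set of solutions of E₂ of rank n − 1. Then there exist unknowns x_k, x_l ∈ Ξ and a family of at most (|E₁|_{x_k} + |E₁|_{x_l})² ℚ-linear subspaces of ℚ^n, each of dimension at most n − 1, whose union contains the length type (regarded as a vector in ℚ^n) of every common solution of E₁ and E₂ of rank n − 1. -/
open Polynomial

/-- The characteristic polynomial `P(w)` of a word. -/
noncomputable def wordPoly (w : List ℕ) : Polynomial ℤ :=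
  ∑ i ∈ Finset.range w.length, Polynomial.C (w.getD i 0 : ℤ) * Polynomial.X ^ i

/-- Application of a morphism (given by the images of the unknowns) to a word. -/
def mApply {n : ℕ} {β : Type*} (h : Fin n → List β) (w : List (Fin n)) : List β :=
  (w.map h).flatten

/-- The morphism maps every unknown to a word over the alphabet `A`. -/
def IntoAlph {n : ℕ} (A : Finset ℕ) (h : Fin n → List ℕ) : Prop :=
  ∀ i, ∀ a ∈ h i, a ∈ A

/-- `w` is a product of words from `A`. -/
def InStar (A : Finset (List ℕ)) (w : List ℕ) : Prop :=
  ∃ l : List (List ℕ), (∀ u ∈ l, u ∈ A) ∧ l.flatten = w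

/-- The combinatorial rank of a morphism: the smallest `r` such that there is a set of
`r` words whose products contain all images of the unknowns. -/
noncomputable def mRank {n : ℕ} (h : Fin n → List ℕ) : ℕ :=
  sInf {r | ∃ A : Finset (List ℕ), A.card = r ∧ ∀ i, InStar A (h i)}

/-- The length type of a morphism, as a rational vector. -/
def lenQ {n : ℕ} (h : Fin n → List ℕ) : Fin n → ℚ :=
  fun i => ((h i).length : ℚ)

/-- `|w|_L`: the length of the image of `w` under any morphism of length type `L`. -/
def lenL {n : ℕ} (L : Fin n → ℕ) (w : List (Fin n)) : ℕ :=
  (w.map L).sum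

/-- The polynomial `Q_{E,x,L}` for the word equation `u = v`, the unknown `x` and the
length type `L`. -/
noncomputable def eqPoly {n : ℕ} (u v : List (Fin n)) (x : Fin n) (L : Fin n → ℕ) :
    Polynomial ℤ :=
  (∑ i ∈ Finset.range u.length,
      if u.getD i x = x then (Polynomial.X : Polynomial ℤ) ^ lenL L (u.take i) else 0)
    - ∑ i ∈ Finset.range v.length,
      if v.getD i x = x then (Polynomial.X : Polynomial ℤ) ^ lenL L (v.take i) else 0

/-- Embedding of `ℤ[X]` into the field `ℚ(X)` of rational functions. -/
noncomputable def toRF (p : Polynomial ℤ) : RatFunc ℚ :=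
  algebraMap (Polynomial ℚ) (RatFunc ℚ) (p.map (Int.castRingHom ℚ))

/-! ### Formal monomials and their evaluations -/

/-- The value of the linear form `m` at the length type `L`. -/
def ddot {n : ℕ} (L m : Fin n → ℕ) : ℕ := ∑ i, m i * L i

/-- Sum of `X ^ (m · L)` over a multiset of monomials. -/
noncomputable def ev {n : ℕ} (L : Fin n → ℕ) (s : Multiset (Fin n → ℕ)) : Polynomial ℤ :=
  (s.map (fun m => (Polynomial.X : Polynomial ℤ) ^ ddot L m)).sum

/-- Positions of the occurrences of `x` in `w`, as linear forms. -/
def occ {n : ℕ} (x : Fin n) : List (Fin n) → List (Fin n → ℕ)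
  | [] => []
  | y :: w => (if y = x then [0] else []) ++ (occ x w).map (fun m => m + Pi.single y 1)

/-- Sum of `X ^ position` over the occurrences of `x` in `w`. -/
noncomputable def rv {n : ℕ} (L : Fin n → ℕ) : List (Fin n) → (Fin n → Polynomial ℤ)
  | [] => 0
  | y :: w => Pi.single y 1 + (Polynomial.X : Polynomial ℤ) ^ L y • rv L w

theorem ddot_add {n : ℕ} (L a b : Fin n → ℕ) : ddot L (a + b) = ddot L a + ddot L b := by
  simp [ddot, add_mul, Finset.sum_add_distrib]

theorem ddot_single {n : ℕ} (L : Fin n → ℕ) (y : Fin n) : ddot L (Pi.single y 1) = L y := by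
  simp [ddot, Pi.single_apply]

theorem ddot_mono {n : ℕ} (L : Fin n → ℕ) {a b : Fin n → ℕ} (h : a ≤ b) :
    ddot L a ≤ ddot L b :=
  Finset.sum_le_sum fun i _ => Nat.mul_le_mul_right _ (h i)

theorem ev_add {n : ℕ} (L : Fin n → ℕ) (s t : Multiset (Fin n → ℕ)) :
    ev L (s + t) = ev L s + ev L t := by simp [ev]

theorem ev_shift {n : ℕ} (L : Fin n → ℕ) (a : Fin n → ℕ) (l : List (Fin n → ℕ)) :
    ev L (l.map (fun m => m + a) : List _) = X ^ ddot L a * ev L (l : Multiset _) := by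
  induction l with
  | nil => simp [ev]
  | cons m l ih =>
    simp only [ev, Multiset.map_coe, Multiset.sum_coe, List.map_cons, List.sum_cons] at ih ⊢
    rw [ih, ddot_add, pow_add]; ring

theorem ev_occ {n : ℕ} (L : Fin n → ℕ) (x : Fin n) (w : List (Fin n)) :
    ev L (occ x w : Multiset _) = rv L w x := by
  induction w with
  | nil => simp [ev, occ, rv]
  | cons y w ih =>
    rw [occ, ← Multiset.coe_add, ev_add, ev_shift, ih, ddot_single, rv]
    simp only [Pi.add_apply, Pi.smul_apply, smul_eq_mul]
    congr 1
    by_cases h : y = x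
    · subst h; simp [ev, ddot]
    · simp [ev, h, Pi.single_apply, Ne.symm h]

theorem occ_length {n : ℕ} (x : Fin n) (w : List (Fin n)) :
    (occ x w).length = w.count x := by
  induction w with
  | nil => simp [occ]
  | cons y w ih =>
    by_cases h : y = x
    · simp [occ, ih, h]
    · simp [occ, ih, h]

theorem occ_sorted {n : ℕ} (x : Fin n) (w : List (Fin n)) :
    (occ x w).Pairwise (· ≤ ·) := by
  induction w with
  | nil => simp [occ]
  | cons y w ih =>
    rw [occ, List.pairwise_append]
    refine ⟨by split_ifs <;> simp, ?_, ?_⟩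
    · rw [List.pairwise_map]
      exact ih.imp fun h => by simpa using h
    · intro a ha b _
      split_ifs at ha
      · simp at ha; subst ha; exact zero_le
      · simp at ha

/-- All translates of the chain `c` by the elements of `l`. -/
def shifts {n : ℕ} (l c : List (Fin n → ℕ)) : List (List (Fin n → ℕ)) :=
  l.map (fun a => c.map (fun m => m + a))

theorem ev_shifts {n : ℕ} (L : Fin n → ℕ) (l c : List (Fin n → ℕ)) :
    ev L ((shifts l c).flatten : Multiset _) = ev L (l : Multiset _) * ev L (c : Multiset _) := by
  induction l with
  | nil => simp [shifts, ev]
  | cons a l ih =>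
    have : (shifts (a :: l) c).flatten = c.map (fun m => m + a) ++ (shifts l c).flatten := by
      simp [shifts]
    rw [this, ← Multiset.coe_add, ev_add, ih, ev_shift]
    have : ((a :: l : List (Fin n → ℕ)) : Multiset (Fin n → ℕ)) = {a} + (l : Multiset _) := by simp
    rw [this, ev_add]
    simp [ev]; ring

theorem shifts_sorted {n : ℕ} (l c : List (Fin n → ℕ)) (hc : c.Pairwise (· ≤ ·)) :
    ∀ d ∈ shifts l c, d.Pairwise (· ≤ ·) := by
  intro d hd
  simp only [shifts, List.mem_map] at hd
  obtain ⟨a, _, rfl⟩ := hd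
  rw [List.pairwise_map]
  exact hc.imp fun h => by simpa using h

theorem coeff_sum_pow (s : Multiset ℕ) (d : ℕ) :
    ((s.map (fun e => (X : Polynomial ℤ) ^ e)).sum).coeff d = s.count d := by
  induction s using Multiset.induction with
  | empty => simp
  | cons a s ih =>
    simp only [Multiset.map_cons, Multiset.sum_cons, coeff_add, ih, coeff_X_pow,
      Multiset.count_cons]
    split_ifs <;> simp <;> ring

theorem map_eq_of_ev_eq {n : ℕ} (L : Fin n → ℕ) (s t : Multiset (Fin n → ℕ))
    (h : ev L s = ev L t) : s.map (ddot L) = t.map (ddot L) := by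
  ext d
  have h1 := coeff_sum_pow (s.map (ddot L)) d
  have h2 := coeff_sum_pow (t.map (ddot L)) d
  rw [Multiset.map_map] at h1 h2
  have : (ev L s).coeff d = (ev L t).coeff d := by rw [h]
  simp only [ev] at this
  simp only [Function.comp_def] at h1 h2
  rw [h1, h2] at this
  exact_mod_cast this

/-! ### The covering lemma -/

/-- The hyperplane on which two linear forms agree. -/
noncomputable def hyp {n : ℕ} (a b : Fin n → ℕ) : Submodule ℚ (Fin n → ℚ) :=
  LinearMap.ker (∑ i, ((a i : ℚ) - (b i : ℚ)) • (LinearMap.proj i : (Fin n → ℚ) →ₗ[ℚ] ℚ))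

theorem mem_hyp {n : ℕ} (a b L : Fin n → ℕ) (h : ddot L a = ddot L b) :
    (fun i => (L i : ℚ)) ∈ hyp a b := by
  simp only [hyp, LinearMap.mem_ker, LinearMap.sum_apply, LinearMap.smul_apply,
    LinearMap.proj_apply, smul_eq_mul, sub_mul, Finset.sum_sub_distrib]
  rw [sub_eq_zero]
  simp only [ddot] at h
  exact_mod_cast h

theorem finrank_hyp {n : ℕ} (a b : Fin n → ℕ) (h : a ≠ b) :
    Module.finrank ℚ (hyp a b) ≤ n - 1 := by
  have hne : hyp a b ≠ ⊤ := by
    intro ht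
    apply h
    funext i
    have : (Pi.single i 1 : Fin n → ℚ) ∈ hyp a b := by rw [ht]; trivial
    simp only [hyp, LinearMap.mem_ker, LinearMap.sum_apply, LinearMap.smul_apply,
      LinearMap.proj_apply, smul_eq_mul, Pi.single_apply] at this
    simp at this
    exact_mod_cast sub_eq_zero.mp this
  have := Submodule.finrank_lt hne
  simp at this
  omega

theorem first_exists {n : ℕ} (p : (Fin n → ℕ) → Bool) (c : List (Fin n → ℕ))
    (hc : c.Pairwise (· ≤ ·)) (m : Fin n → ℕ) (hm : m ∈ c) (hp : p m) :
    ∃ t, c.find? p = some t ∧ p t ∧ t ≤ m := by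
  induction c with
  | nil => simp at hm
  | cons a c ih =>
    rw [List.pairwise_cons] at hc
    by_cases ha : p a
    · refine ⟨a, by simp [List.find?_cons, ha], ha, ?_⟩
      rcases List.mem_cons.mp hm with rfl | h
      · exact le_rfl
      · exact hc.1 _ h
    · rcases List.mem_cons.mp hm with rfl | h
      · exact absurd hp ha
      · obtain ⟨t, h1, h2, h3⟩ := ih hc.2 h
        exact ⟨t, by simp [List.find?_cons, ha, h1], h2, h3⟩

open Classical in
theorem cover_lemma {n : ℕ} (P N : List (List (Fin n → ℕ)))
    (hP : ∀ c ∈ P, c.Pairwise (· ≤ ·)) (hN : ∀ c ∈ N, c.Pairwise (· ≤ ·))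
    (hne : (P.flatten : Multiset (Fin n → ℕ)) ≠ (N.flatten : Multiset (Fin n → ℕ))) :
    ∃ S : Finset (Submodule ℚ (Fin n → ℚ)), S.card ≤ P.length * N.length ∧
      (∀ W ∈ S, Module.finrank ℚ W ≤ n - 1) ∧
      ∀ L : Fin n → ℕ, ev L (P.flatten : Multiset (Fin n → ℕ)) = ev L (N.flatten : Multiset (Fin n → ℕ)) →
        ∃ W ∈ S, (fun i => (L i : ℚ)) ∈ W := by
  set p : Multiset (Fin n → ℕ) := Multiset.ofList P.flatten with hp
  set q : Multiset (Fin n → ℕ) := Multiset.ofList N.flatten with hq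
  let fp : List (Fin n → ℕ) → Option (Fin n → ℕ) := fun c => c.find? (fun m => m ∈ p - q)
  let fq : List (Fin n → ℕ) → Option (Fin n → ℕ) := fun c => c.find? (fun m => m ∈ q - p)
  let TP : List (Fin n → ℕ) := P.filterMap fp
  let TN : List (Fin n → ℕ) := N.filterMap fq
  refine ⟨(TP.toFinset ×ˢ TN.toFinset).image (fun x => hyp x.1 x.2), ?_, ?_, ?_⟩
  · refine Finset.card_image_le.trans ?_
    rw [Finset.card_product]
    exact Nat.mul_le_mul ((List.toFinset_card_le _).trans (List.length_filterMap_le _ _))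
      ((List.toFinset_card_le _).trans (List.length_filterMap_le _ _))
  · intro W hW
    simp only [Finset.mem_image, Finset.mem_product, List.mem_toFinset, Prod.exists] at hW
    obtain ⟨a, b, ⟨ha, hb⟩, rfl⟩ := hW
    apply finrank_hyp
    rintro rfl
    simp only [TP, TN, List.mem_filterMap] at ha hb
    obtain ⟨c, -, hc⟩ := ha
    obtain ⟨d, -, hd⟩ := hb
    have h1 := List.find?_some hc
    have h2 := List.find?_some hd
    simp only [decide_eq_true_eq] at h1 h2
    rw [← Multiset.count_pos, Multiset.count_sub] at h1 h2
    omega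
  · intro L hL
    have hmap := map_eq_of_ev_eq L _ _ hL
    have hmap' : (p - q).map (ddot L) = (q - p).map (ddot L) := by
      have e1 : (p - q) + (p ∩ q) = p := by
        ext m; simp only [Multiset.count_add, Multiset.count_sub, Multiset.count_inter]; omega
      have e2 : (q - p) + (p ∩ q) = q := by
        ext m; simp only [Multiset.count_add, Multiset.count_sub, Multiset.count_inter]; omega
      have f1 := congrArg (Multiset.map (ddot L)) e1
      have f2 := congrArg (Multiset.map (ddot L)) e2
      rw [Multiset.map_add] at f1 f2
      exact add_right_cancel (f1.trans (hmap.trans f2.symm))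
    have hnz : p - q ≠ 0 := by
      intro h0
      have h0' : q - p = 0 := by
        rw [h0] at hmap'
        simpa using hmap'.symm
      exact hne (le_antisymm (tsub_eq_zero_iff_le.mp h0) (tsub_eq_zero_iff_le.mp h0'))
    obtain ⟨m, hm, hmin⟩ := (p - q).toFinset.exists_min_image (ddot L)
      (by simpa [Finset.nonempty_iff_ne_empty] using hnz)
    rw [Multiset.mem_toFinset] at hm
    have hmin' : ∀ x ∈ p - q, ddot L m ≤ ddot L x := fun x hx =>
      hmin x (Multiset.mem_toFinset.mpr hx)
    have hminq : ∀ x ∈ q - p, ddot L m ≤ ddot L x := by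
      intro x hx
      have : ddot L x ∈ (p - q).map (ddot L) := by
        rw [hmap']; exact Multiset.mem_map_of_mem _ hx
      obtain ⟨y, hy, hxy⟩ := Multiset.mem_map.mp this
      rw [← hxy]; exact hmin' y hy
    have : ddot L m ∈ (q - p).map (ddot L) := by
      rw [← hmap']; exact Multiset.mem_map_of_mem _ hm
    obtain ⟨m', hm', hmm⟩ := Multiset.mem_map.mp this
    have hmP : m ∈ P.flatten := by
      have := Multiset.mem_of_le (Multiset.sub_le_self p q) hm
      simpa [hp] using this
    have hmN : m' ∈ N.flatten := by
      have := Multiset.mem_of_le (Multiset.sub_le_self q p) hm'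
      simpa [hq] using this
    obtain ⟨c, hcP, hmc⟩ := List.mem_flatten.mp hmP
    obtain ⟨d, hdN, hmd⟩ := List.mem_flatten.mp hmN
    obtain ⟨t, ht1, ht2, ht3⟩ := first_exists (fun m => decide (m ∈ p - q)) c (hP c hcP) m hmc
      (by simpa using hm)
    obtain ⟨s, hs1, hs2, hs3⟩ := first_exists (fun m => decide (m ∈ q - p)) d (hN d hdN) m' hmd
      (by simpa using hm')
    simp only [decide_eq_true_eq] at ht2 hs2
    refine ⟨hyp t s, ?_, ?_⟩
    · simp only [Finset.mem_image, Finset.mem_product, List.mem_toFinset, Prod.exists]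
      exact ⟨t, s, ⟨List.mem_filterMap.mpr ⟨c, hcP, ht1⟩, List.mem_filterMap.mpr ⟨d, hdN, hs1⟩⟩,
        rfl⟩
    · apply mem_hyp
      have a1 := ddot_mono L ht3
      have a2 := ddot_mono L hs3
      have a3 := hmin' t ht2
      have a4 := hminq s hs2
      omega

/-! ### Words as polynomials -/

/-- Characteristic polynomial of a word, defined recursively. -/
noncomputable def wp : List ℕ → Polynomial ℤ
  | [] => 0
  | a :: w => C (a : ℤ) + X * wp w

theorem wp_append (u v : List ℕ) : wp (u ++ v) = wp u + X ^ u.length * wp v := by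
  induction u with
  | nil => simp [wp]
  | cons a u ih => simp only [List.cons_append, wp, ih, List.length_cons, pow_succ]; ring

theorem wp_inj (u v : List ℕ) (hu : ∀ a ∈ u, 0 < a) (hv : ∀ a ∈ v, 0 < a)
    (h : wp u = wp v) : u = v := by
  induction u generalizing v with
  | nil =>
    cases v with
    | nil => rfl
    | cons b v =>
      have := congrArg (fun p => coeff p 0) h
      simp [wp] at this
      have := hv b (by simp)
      omega
  | cons a u ih =>
    cases v with
    | nil =>
      have := congrArg (fun p => coeff p 0) h
      simp [wp] at this
      have := hu a (by simp)
      omega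
    | cons b v =>
      have h0 := congrArg (fun p => coeff p 0) h
      simp [wp] at h0
      subst h0
      simp only [wp, add_right_inj] at h
      have h' := mul_left_cancel₀ X_ne_zero h
      rw [ih v (fun x hx => hu x (by simp [hx])) (fun x hx => hv x (by simp [hx])) h']

theorem mApply_cons {n : ℕ} {β : Type*} (h : Fin n → List β) (y : Fin n) (w : List (Fin n)) :
    mApply h (y :: w) = h y ++ mApply h w := by simp [mApply]

/-- Length type. -/
def lt {n : ℕ} (h : Fin n → List ℕ) : Fin n → ℕ := fun i => (h i).length

theorem wp_mApply {n : ℕ} (h : Fin n → List ℕ) (w : List (Fin n)) :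
    wp (mApply h w) = ∑ x, rv (lt h) w x * wp (h x) := by
  induction w with
  | nil => simp [mApply, wp, rv]
  | cons y w ih =>
    rw [mApply_cons, wp_append, ih, rv]
    simp only [Pi.add_apply, Pi.smul_apply, smul_eq_mul, add_mul, Finset.sum_add_distrib,
      Finset.mul_sum, mul_assoc]
    congr 1
    simp [Pi.single_apply]

theorem eval_rv_nonneg {n : ℕ} (L : Fin n → ℕ) (w : List (Fin n)) (x : Fin n) (t : ℤ)
    (ht : 0 ≤ t) : 0 ≤ (rv L w x).eval t := by
  induction w with
  | nil => simp [rv]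
  | cons y w ih =>
    simp only [rv, Pi.add_apply, Pi.smul_apply, smul_eq_mul, eval_add, eval_mul, eval_pow, eval_X]
    have : 0 ≤ ((Pi.single y 1 : Fin n → Polynomial ℤ) x).eval t := by
      rw [Pi.single_apply]; split_ifs <;> simp
    positivity

theorem eval_rv_head {n : ℕ} (L : Fin n → ℕ) (w : List (Fin n)) (x : Fin n) (t : ℤ)
    (ht : 0 ≤ t) : 1 ≤ (rv L (x :: w) x).eval t := by
  simp only [rv, Pi.add_apply, Pi.smul_apply, smul_eq_mul, eval_add, eval_mul, eval_pow, eval_X]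
  have := eval_rv_nonneg L w x t ht
  have h2 : 0 ≤ t ^ L x * (rv L w x).eval t := by positivity
  simp; exact h2

theorem eval_rv_other {n : ℕ} (L : Fin n → ℕ) (w : List (Fin n)) (x y : Fin n) (hxy : x ≠ y)
    (hy : L y ≠ 0) : (rv L (y :: w) x).eval 0 = 0 := by
  simp [rv, Pi.single_apply, hxy, hy]

theorem rv_ne {n : ℕ} (L : Fin n → ℕ) (u v : List (Fin n)) (huv : u ≠ v) :
    (∃ x, rv L u x ≠ rv L v x) ∨ ∃ x y, x ≠ y ∧ L x = 0 ∧ L y = 0 := by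
  induction u generalizing v with
  | nil =>
    cases v with
    | nil => exact absurd rfl huv
    | cons y v =>
      left; refine ⟨y, fun h => ?_⟩
      have := eval_rv_head L v y 0 le_rfl
      rw [← h] at this
      simp [rv] at this
  | cons x u ih =>
    cases v with
    | nil =>
      left; refine ⟨x, fun h => ?_⟩
      have := eval_rv_head L u x 0 le_rfl
      rw [h] at this
      simp [rv] at this
    | cons y v =>
      by_cases hxy : x = y
      · subst hxy
        rcases ih v (by simpa using huv) with ⟨z, hz⟩ | h
        · left; refine ⟨z, fun h => hz ?_⟩
          simp only [rv, Pi.add_apply, Pi.smul_apply, smul_eq_mul, add_right_inj] at h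
          exact mul_left_cancel₀ (pow_ne_zero _ X_ne_zero) h
        · exact Or.inr h
      · by_cases hy : L y = 0
        · by_cases hx : L x = 0
          · exact Or.inr ⟨x, y, hxy, hx, hy⟩
          · left; refine ⟨y, fun h => ?_⟩
            have h1 := eval_rv_head L v y 0 le_rfl
            rw [← h, eval_rv_other L u y x (Ne.symm hxy) hx] at h1
            omega
        · left; refine ⟨x, fun h => ?_⟩
          have h1 := eval_rv_head L u x 0 le_rfl
          rw [h, eval_rv_other L v x y hxy hy] at h1
          omega

/-! ### Rank -/

theorem mRank_le {n : ℕ} (h : Fin n → List ℕ) (A : Finset (List ℕ))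
    (hA : ∀ i, InStar A (h i)) : mRank h ≤ A.card :=
  Nat.sInf_le ⟨A, rfl, hA⟩

theorem gen_nonempty {n : ℕ} (h : Fin n → List ℕ) :
    ∃ A : Finset (List ℕ), A.card + (Finset.univ.filter (fun i => h i = [])).card ≤ n ∧
      ∀ i, InStar A (h i) := by
  refine ⟨(Finset.univ.filter (fun i => ¬ h i = [])).image h, ?_, ?_⟩
  · have h1 : ((Finset.univ.filter (fun i => ¬ h i = [])).image h).card ≤
      (Finset.univ.filter (fun i => ¬ h i = [])).card := Finset.card_image_le
    have h2 := Finset.card_filter_add_card_filter_not (s := (Finset.univ : Finset (Fin n)))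
      (fun i => h i = [])
    simp only [Finset.card_univ, Fintype.card_fin] at h2
    omega
  · intro i
    by_cases hi : h i = []
    · exact ⟨[], by simp, by simp [hi]⟩
    · refine ⟨[h i], ?_, by simp⟩
      intro u hu
      simp only [List.mem_singleton] at hu
      subst hu
      exact Finset.mem_image_of_mem h (by simp [hi])

/-- The elementary transformation of coefficient vectors. -/
noncomputable def elemT {n : ℕ} (a b : Fin n) (e : ℕ) :
    (Fin n → Polynomial ℤ) →ₗ[Polynomial ℤ] (Fin n → Polynomial ℤ) where
  toFun q := fun z => if z = b then X ^ e * q b else if z = a then q a + q b else q z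
  map_add' p q := by
    funext z; simp only [Pi.add_apply]; split_ifs <;> ring
  map_smul' c q := by
    funext z; simp only [Pi.smul_apply, smul_eq_mul, RingHom.id_apply]; split_ifs <;> ring

theorem elemT_inj {n : ℕ} (a b : Fin n) (hab : a ≠ b) (e : ℕ) :
    Function.Injective (elemT a b e) := by
  rw [← LinearMap.ker_eq_bot, LinearMap.ker_eq_bot']
  intro q hq
  have hb : q b = 0 := by
    have := congrFun hq b
    simpa [elemT] using this
  funext z
  have hz := congrFun hq z
  by_cases h1 : z = b
  · subst h1; simpa using hb
  · by_cases h2 : z = a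
    · subst h2; simpa [elemT, h1, hb] using hz
    · simpa [elemT, h1, h2] using hz

/-- The elementary substitution `b ↦ ab`. -/
def elemS {n : ℕ} (a b : Fin n) : Fin n → List (Fin n) := fun z => if z = b then [a, b] else [z]

theorem elem_mApply {n : ℕ} (a b : Fin n) (hab : a ≠ b) (h : Fin n → List ℕ) (t : List ℕ)
    (hb : h b = h a ++ t) (w : List (Fin n)) :
    mApply (Function.update h b t) (mApply (elemS a b) w) = mApply h w := by
  induction w with
  | nil => simp [mApply]
  | cons y w ih =>
    by_cases hy : y = b
    · subst hy
      have e : elemS a y y = [a, y] := by simp [elemS]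
      rw [mApply_cons (elemS a y), e, List.cons_append, List.cons_append, List.nil_append,
        mApply_cons, mApply_cons, mApply_cons]
      rw [ih]
      simp [hab, hb]
    · have e : elemS a b y = [y] := by simp [elemS, hy]
      rw [mApply_cons (elemS a b), e, List.cons_append, List.nil_append,
        mApply_cons, mApply_cons]
      rw [ih]
      simp [hy]

theorem elem_rv {n : ℕ} (a b : Fin n) (hab : a ≠ b) (h : Fin n → List ℕ) (t : List ℕ)
    (hb : h b = h a ++ t) (w : List (Fin n)) :
    rv (lt (Function.update h b t)) (mApply (elemS a b) w) =
      elemT a b (h a).length (rv (lt h) w) := by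
  induction w with
  | nil => simp [mApply, rv]
  | cons y w ih =>
    rw [mApply_cons (elemS a b), rv, map_add, map_smul, ← ih]
    by_cases hy : y = b
    · subst hy
      simp only [elemS, if_true, List.cons_append, List.nil_append, rv, smul_add]
      rw [smul_smul, ← pow_add, ← add_assoc]
      congr 1
      · funext z
        by_cases h1 : z = y
        · subst h1; simp [elemT, hab, Pi.single_apply, lt, Ne.symm hab]
        · by_cases h2 : z = a
          · subst h2; simp [elemT, h1, Pi.single_apply]
          · simp [elemT, h1, h2, Pi.single_apply]
      · simp [lt, hab, hb]
    · simp only [elemS, hy, if_false, List.cons_append, List.nil_append, rv]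
      congr 1
      · funext z
        by_cases h1 : z = b
        · subst h1; simp [elemT, Pi.single_apply, Ne.symm hy]
        · by_cases h2 : z = a
          · subst h2; simp [elemT, h1, Pi.single_apply, Ne.symm hy]
          · simp [elemT, h1, h2, Pi.single_apply]
      · simp [lt, hy]

theorem base_rv {n : ℕ} (h : Fin n → List ℕ)
    (hpre : ∀ a b, a ≠ b → h a ≠ [] → ¬ h a <+: h b) (N : ℕ) (u v : List (Fin n))
    (hN : u.length + v.length ≤ N) (huv : mApply h u = mApply h v) (z : Fin n) (hz : h z ≠ []) :
    rv (lt h) u z = rv (lt h) v z := by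
  have drop : ∀ (y : Fin n) (w : List (Fin n)), h y = [] →
      mApply h (y :: w) = mApply h w ∧ rv (lt h) (y :: w) z = rv (lt h) w z := by
    intro y w hy
    have : z ≠ y := by rintro rfl; exact hz hy
    exact ⟨by rw [mApply_cons, hy]; rfl, by simp [rv, lt, hy, Pi.single_apply, this]⟩
  induction N generalizing u v with
  | zero =>
    have h1 : u = [] := List.eq_nil_of_length_eq_zero (by omega)
    have h2 : v = [] := List.eq_nil_of_length_eq_zero (by omega)
    rw [h1, h2]
  | succ N ih =>
    cases u with
    | nil =>
      cases v with
      | nil => rfl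
      | cons y v =>
        by_cases hy : h y = []
        · obtain ⟨d1, d2⟩ := drop y v hy
          rw [d2]; exact ih [] v (by simp at hN ⊢; omega) (by rw [huv, d1])
        · rw [mApply_cons] at huv
          simp [mApply] at huv
          exact absurd huv.1 hy
    | cons x u =>
      by_cases hx : h x = []
      · obtain ⟨d1, d2⟩ := drop x u hx
        rw [d2]; exact ih u v (by simp at hN ⊢; omega) (by rw [← huv, d1])
      · cases v with
        | nil =>
          rw [mApply_cons] at huv
          simp [mApply] at huv
          exact absurd huv.1 hx
        | cons y v =>
          by_cases hy : h y = []
          · obtain ⟨d1, d2⟩ := drop y v hy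
            rw [d2]; exact ih (x :: u) v (by simp at hN ⊢; omega) (by rw [huv, d1])
          · have hxy : x = y := by
              by_contra hne
              rw [mApply_cons, mApply_cons] at huv
              have p1 : h x <+: h y ++ mApply h v := ⟨_, huv⟩
              have p2 : h y <+: h y ++ mApply h v := List.prefix_append _ _
              rcases List.prefix_or_prefix_of_prefix p1 p2 with p | p
              · exact hpre x y hne hx p
              · exact hpre y x (Ne.symm hne) hy p
            subst hxy
            rw [mApply_cons, mApply_cons] at huv
            have := ih u v (by simp at hN ⊢; omega) (List.append_cancel_left huv)
            simp [rv, this]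

theorem key {n : ℕ} (N : ℕ) (h : Fin n → List ℕ) (hN : ∑ i, (h i).length ≤ N) :
    ∃ (Z : Finset (Fin n)) (A : Finset (List ℕ))
      (T : (Fin n → Polynomial ℤ) →ₗ[Polynomial ℤ] (Fin n → Polynomial ℤ)),
      A.card + Z.card ≤ n ∧ (∀ i, InStar A (h i)) ∧ Function.Injective T ∧
      ∀ u v, mApply h u = mApply h v → ∀ z, z ∉ Z → T (rv (lt h) u - rv (lt h) v) z = 0 := by
  induction N using Nat.strong_induction_on generalizing h with
  | _ N ih =>
  by_cases hpre : ∀ a b, a ≠ b → h a ≠ [] → ¬ h a <+: h b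
  · obtain ⟨A, hA1, hA2⟩ := gen_nonempty h
    refine ⟨_, A, LinearMap.id, hA1, hA2, fun _ _ h => h, ?_⟩
    intro u v huv z hz
    simp only [Finset.mem_filter, Finset.mem_univ, true_and] at hz
    simp only [LinearMap.id_apply, Pi.sub_apply, sub_eq_zero]
    exact base_rv h hpre _ u v le_rfl huv z hz
  · push Not at hpre
    obtain ⟨a, b, hab, ha, t, ht⟩ := hpre
    have hlen : ∑ i, (Function.update h b t i).length < ∑ i, (h i).length := by
      apply Finset.sum_lt_sum
      · intro i _
        by_cases hi : i = b
        · subst hi; simp [← ht]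
        · simp [hi]
      · refine ⟨b, Finset.mem_univ _, ?_⟩
        have := List.length_pos_iff.mpr ha
        simp [← ht]; exact this
    obtain ⟨Z, A, T, h1, h2, h3, h4⟩ := ih _ (lt_of_lt_of_le hlen hN) (Function.update h b t) le_rfl
    refine ⟨Z, A, T.comp (elemT a b (h a).length), h1, ?_, ?_, ?_⟩
    · intro i
      by_cases hi : i = b
      · subst hi
        obtain ⟨l1, m1, f1⟩ := h2 a
        obtain ⟨l2, m2, f2⟩ := h2 i
        refine ⟨l1 ++ l2, ?_, ?_⟩
        · intro u hu
          rcases List.mem_append.mp hu with hu | hu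
          · exact m1 u hu
          · exact m2 u hu
        · rw [List.flatten_append, f1, f2, ← ht]
          simp [hab]
      · have := h2 i
        simpa [hi] using this
    · exact h3.comp (elemT_inj a b hab _)
    · intro u v huv z hz
      rw [LinearMap.comp_apply, map_sub, ← elem_rv a b hab h t ht.symm,
        ← elem_rv a b hab h t ht.symm]
      exact h4 _ _ (by rw [elem_mApply a b hab h t ht.symm, elem_mApply a b hab h t ht.symm, huv])
        z hz

theorem parallel {n : ℕ} (h : Fin n → List ℕ) (hn : 0 < n) (hr : mRank h = n - 1)
    (u₁ v₁ u₂ v₂ : List (Fin n)) (e₁ : mApply h u₁ = mApply h v₁)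
    (e₂ : mApply h u₂ = mApply h v₂) (k l : Fin n) :
    (rv (lt h) u₁ k - rv (lt h) v₁ k) * (rv (lt h) u₂ l - rv (lt h) v₂ l) =
      (rv (lt h) u₁ l - rv (lt h) v₁ l) * (rv (lt h) u₂ k - rv (lt h) v₂ k) := by
  obtain ⟨Z, A, T, h1, h2, h3, h4⟩ := key _ h le_rfl
  have hZ : Z.card ≤ 1 := by
    have := mRank_le h A h2
    omega
  set q₁ := rv (lt h) u₁ - rv (lt h) v₁ with hq₁
  set q₂ := rv (lt h) u₂ - rv (lt h) v₂ with hq₂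
  have z1 := h4 u₁ v₁ e₁
  have z2 := h4 u₂ v₂ e₂
  rw [← hq₁] at z1
  rw [← hq₂] at z2
  change q₁ k * q₂ l = q₁ l * q₂ k
  have zero_of : ∀ q, (∀ z, T q z = 0) → q = 0 := by
    intro q hq
    apply h3
    rw [map_zero]; funext z; exact hq z
  by_cases hzz : ∃ z ∈ Z, True
  · obtain ⟨z, hz, -⟩ := hzz
    have only : ∀ y, y ≠ z → y ∉ Z := fun y hy hyZ => hy (Finset.card_le_one.mp hZ y hyZ z hz)
    have rel : T q₂ z • q₁ - T q₁ z • q₂ = 0 := by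
      apply zero_of
      intro y
      simp only [map_sub, map_smul, Pi.sub_apply, Pi.smul_apply, smul_eq_mul]
      by_cases hy : y = z
      · subst hy; ring
      · rw [z1 y (only y hy), z2 y (only y hy)]; ring
    have rel' : ∀ i, T q₂ z * q₁ i = T q₁ z * q₂ i := by
      intro i
      have := congrFun rel i
      simp only [Pi.sub_apply, Pi.smul_apply, smul_eq_mul, Pi.zero_apply] at this
      linear_combination this
    by_cases hc : T q₁ z = 0
    · have : q₁ = 0 := by
        apply zero_of
        intro y
        by_cases hy : y = z
        · rw [hy, hc]
        · exact z1 y (only y hy)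
      simp [this]
    · apply mul_left_cancel₀ hc
      linear_combination (-q₁ k) * rel' l + q₁ l * rel' k
  · have : q₁ = 0 := by
      apply zero_of
      intro y
      exact z1 y (fun hy => hzz ⟨y, hy, trivial⟩)
    simp [this]

theorem row_ne {n : ℕ} (h : Fin n → List ℕ) (hr : mRank h = n - 1)
    (u v : List (Fin n)) (huv : u ≠ v) : ∃ x, rv (lt h) u x - rv (lt h) v x ≠ 0 := by
  rcases rv_ne (lt h) u v huv with ⟨x, hx⟩ | ⟨x, y, hxy, hx, hy⟩
  · exact ⟨x, sub_ne_zero.mpr hx⟩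
  · exfalso
    obtain ⟨A, hA1, hA2⟩ := gen_nonempty h
    have h1 := mRank_le h A hA2
    have h2 : 1 < (Finset.univ.filter (fun i => h i = [])).card := by
      rw [Finset.one_lt_card]
      refine ⟨x, ?_, y, ?_, hxy⟩
      · simpa [lt] using hx
      · simpa [lt] using hy
    omega

theorem sol_iff {n : ℕ} (A : Finset ℕ) (hA : ∀ a ∈ A, 0 < a) (h : Fin n → List ℕ)
    (hI : IntoAlph A h) (u v : List (Fin n)) :
    mApply h u = mApply h v ↔
      ∑ x, (rv (lt h) u x - rv (lt h) v x) * wp (h x) = 0 := by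
  have hpos : ∀ w : List (Fin n), ∀ a ∈ mApply h w, 0 < a := by
    intro w a ha
    simp only [mApply, List.mem_flatten, List.mem_map] at ha
    obtain ⟨_, ⟨x, _, rfl⟩, hx⟩ := ha
    exact hA a (hI x a hx)
  simp only [sub_mul, Finset.sum_sub_distrib, ← wp_mApply, sub_eq_zero]
  exact ⟨fun h => by rw [h], fun h => wp_inj _ _ (hpos u) (hpos v) h⟩

/-- Proportional nonzero rows: a solution of the first is a solution of the second. -/
theorem transfer {n : ℕ} (q₁ q₂ p : Fin n → Polynomial ℤ) (k : Fin n) (hk : q₁ k ≠ 0)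
    (hpar : ∀ l, q₁ k * q₂ l = q₁ l * q₂ k) (h0 : ∑ x, q₁ x * p x = 0) :
    ∑ x, q₂ x * p x = 0 := by
  apply mul_left_cancel₀ hk
  rw [mul_zero, Finset.mul_sum]
  calc ∑ x, q₁ k * (q₂ x * p x) = ∑ x, q₂ k * (q₁ x * p x) :=
        Finset.sum_congr rfl fun x _ => by linear_combination p x * hpar x
    _ = 0 := by rw [← Finset.mul_sum, h0, mul_zero]

theorem exists_minor {n : ℕ} (A : Finset ℕ) (hA : ∀ a ∈ A, 0 < a) (h : Fin n → List ℕ)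
    (hI : IntoAlph A h) (hr : mRank h = n - 1) (u₁ v₁ u₂ v₂ : List (Fin n)) (hne : u₁ ≠ v₁)
    (e₁ : mApply h u₁ = mApply h v₁) (e₂ : mApply h u₂ ≠ mApply h v₂) :
    ∃ k l, (rv (lt h) u₁ k - rv (lt h) v₁ k) * (rv (lt h) u₂ l - rv (lt h) v₂ l) ≠
      (rv (lt h) u₁ l - rv (lt h) v₁ l) * (rv (lt h) u₂ k - rv (lt h) v₂ k) := by
  obtain ⟨k, hk⟩ := row_ne h hr u₁ v₁ hne
  by_contra hcon
  push Not at hcon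
  apply e₂
  rw [sol_iff A hA h hI] at e₁ ⊢
  exact transfer (fun x => rv (lt h) u₁ x - rv (lt h) v₁ x)
    (fun x => rv (lt h) u₂ x - rv (lt h) v₂ x) _ k hk (hcon k) e₁

/-- Chains of the positive terms of the minor. -/
def posC {n : ℕ} (k l : Fin n) (u₁ v₁ u₂ v₂ : List (Fin n)) : List (List (Fin n → ℕ)) :=
  (shifts (occ k u₁) (occ l u₂) ++ shifts (occ k v₁) (occ l v₂)) ++
    (shifts (occ l u₁) (occ k v₂) ++ shifts (occ l v₁) (occ k u₂))

theorem posC_length {n : ℕ} (k l : Fin n) (u₁ v₁ u₂ v₂ : List (Fin n)) :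
    (posC k l u₁ v₁ u₂ v₂).length = (u₁ ++ v₁).count k + (u₁ ++ v₁).count l := by
  simp [posC, shifts, occ_length, List.count_append, add_assoc]

theorem posC_sorted {n : ℕ} (k l : Fin n) (u₁ v₁ u₂ v₂ : List (Fin n)) :
    ∀ c ∈ posC k l u₁ v₁ u₂ v₂, c.Pairwise (· ≤ ·) := by
  intro c hc
  simp only [posC, List.mem_append] at hc
  rcases hc with (hc | hc) | (hc | hc) <;> exact shifts_sorted _ _ (occ_sorted _ _) c hc

theorem ev_posC {n : ℕ} (L : Fin n → ℕ) (k l : Fin n) (u₁ v₁ u₂ v₂ : List (Fin n)) :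
    ev L ((posC k l u₁ v₁ u₂ v₂).flatten : Multiset _) =
      rv L u₁ k * rv L u₂ l + rv L v₁ k * rv L v₂ l +
        (rv L u₁ l * rv L v₂ k + rv L v₁ l * rv L u₂ k) := by
  simp only [posC, List.flatten_append, ← Multiset.coe_add, ev_add, ev_shifts, ev_occ]

theorem ev_pos_iff {n : ℕ} (L : Fin n → ℕ) (k l : Fin n) (u₁ v₁ u₂ v₂ : List (Fin n)) :
    ev L ((posC k l u₁ v₁ u₂ v₂).flatten : Multiset _) =
      ev L ((posC k l u₁ v₁ v₂ u₂).flatten : Multiset _) ↔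
    (rv L u₁ k - rv L v₁ k) * (rv L u₂ l - rv L v₂ l) =
      (rv L u₁ l - rv L v₁ l) * (rv L u₂ k - rv L v₂ k) := by
  rw [ev_posC, ev_posC]
  constructor <;> intro h <;> linear_combination h

/-- If `E₁, E₂` are nontrivial equations on `n` unknowns whose sets of solutions of rank
`n − 1` differ, then for some unknowns `x_k, x_l` the length types of all common solutions
of rank `n − 1` are covered by at most `(|E₁|_{x_k} + |E₁|_{x_l})²` subspaces of `ℚⁿ` of
dimension at most `n − 1`. -/
theorem cover_theorem {n : ℕ}
    (A : Finset ℕ) (hA : ∀ a ∈ A, 0 < a)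
    (e₁ e₂ : List (Fin n) × List (Fin n))
    (h₁ : e₁.1 ≠ e₁.2) (h₂ : e₂.1 ≠ e₂.2)
    (hdiff :
      {h : Fin n → List ℕ | IntoAlph A h ∧ mApply h e₁.1 = mApply h e₁.2 ∧ mRank h = n - 1}
        ≠ {h : Fin n → List ℕ | IntoAlph A h ∧ mApply h e₂.1 = mApply h e₂.2 ∧
            mRank h = n - 1}) :
    ∃ (k l : Fin n) (S : Finset (Submodule ℚ (Fin n → ℚ))),
      S.card ≤ ((e₁.1 ++ e₁.2).count k + (e₁.1 ++ e₁.2).count l) ^ 2 ∧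
      (∀ W ∈ S, Module.finrank ℚ W ≤ n - 1) ∧
      ∀ h : Fin n → List ℕ, IntoAlph A h →
        mApply h e₁.1 = mApply h e₁.2 → mApply h e₂.1 = mApply h e₂.2 →
        mRank h = n - 1 → ∃ W ∈ S, lenQ h ∈ W := by
  have hn : 0 < n := by
    rcases Nat.eq_zero_or_pos n with rfl | h
    · exact absurd (Subsingleton.elim e₁.1 e₁.2) h₁
    · exact h
  have hmin : ∃ (h : Fin n → List ℕ) (k l : Fin n),
      (rv (lt h) e₁.1 k - rv (lt h) e₁.2 k) * (rv (lt h) e₂.1 l - rv (lt h) e₂.2 l) ≠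
      (rv (lt h) e₁.1 l - rv (lt h) e₁.2 l) * (rv (lt h) e₂.1 k - rv (lt h) e₂.2 k) := by
    by_contra hcon
    push Not at hcon
    apply hdiff
    ext h
    simp only [Set.mem_ofPred_eq]
    constructor
    · rintro ⟨hI, hs, hr⟩
      refine ⟨hI, ?_, hr⟩
      by_contra hns
      obtain ⟨k, l, hkl⟩ := exists_minor A hA h hI hr _ _ _ _ h₁ hs hns
      exact hkl (hcon h k l)
    · rintro ⟨hI, hs, hr⟩
      refine ⟨hI, ?_, hr⟩
      by_contra hns
      obtain ⟨k, l, hkl⟩ := exists_minor A hA h hI hr _ _ _ _ h₂ hs hns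
      exact hkl (by linear_combination -(hcon h k l))
  obtain ⟨h0, k, l, h0kl⟩ := hmin
  obtain ⟨S, hS1, hS2, hS3⟩ := cover_lemma (posC k l e₁.1 e₁.2 e₂.1 e₂.2)
    (posC k l e₁.1 e₁.2 e₂.2 e₂.1) (posC_sorted _ _ _ _ _ _) (posC_sorted _ _ _ _ _ _)
    (fun heq => h0kl ((ev_pos_iff (lt h0) k l _ _ _ _).mp (by rw [heq])))
  refine ⟨k, l, S, ?_, hS2, ?_⟩
  · rw [posC_length, posC_length] at hS1
    rw [sq]; exact hS1
  · intro h hI s1 s2 hr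
    exact hS3 (lt h) ((ev_pos_iff (lt h) k l _ _ _ _).mpr (parallel h hn hr _ _ _ _ s1 s2 k l))
end

section
/- Let E₁, E₂ be a pair of word equations on n unknowns having a common solution of rank n − 1. If E₁ is not balanced, then every solution of E₁ of rank n − 1 is also a solution of E₂. -/
open Polynomial

/-- Application of a morphism between free monoids. -/
def ap {ι β : Type} (h : ι → List β) : List ι → List β
  | [] => []
  | i :: u => h i ++ ap h u

theorem ap_append {ι β : Type} (h : ι → List β) (u v : List ι) :
    ap h (u ++ v) = ap h u ++ ap h v := by
  induction u with
  | nil => rfl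
  | cons i u ih => simp [ap, ih]

theorem ap_ap {ι κ β : Type} (α : ι → List κ) (θ : κ → List β) (u : List ι) :
    ap θ (ap α u) = ap (fun i => ap θ (α i)) u := by
  induction u with
  | nil => rfl
  | cons i u ih => simp [ap, ap_append, ih]

theorem ap_single {ι : Type} (u : List ι) : ap (fun i => [i]) u = u := by
  induction u with
  | nil => rfl
  | cons i u ih => simp [ap, ih]

theorem mApply_eq_ap {n : ℕ} {β : Type} (h : Fin n → List β) (u : List (Fin n)) :
    mApply h u = ap h u := by
  induction u with
  | nil => rfl
  | cons i u ih => simpa [mApply, ap] using ih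

/-- Affine representation: translation part of the word `u`. -/
def aff {ι : Type} (w a : ι → ℝ) : List ι → ℝ
  | [] => 0
  | i :: u => a i + w i * aff w a u

/-- Affine representation: linear part of the word `u`. -/
def wt {ι : Type} (w : ι → ℝ) : List ι → ℝ
  | [] => 1
  | i :: u => w i * wt w u

theorem wt_append {ι : Type} (w : ι → ℝ) (u v : List ι) :
    wt w (u ++ v) = wt w u * wt w v := by
  induction u with
  | nil => simp [wt]
  | cons i u ih => simp [wt, ih, mul_assoc]

theorem aff_append {ι : Type} (w a : ι → ℝ) (u v : List ι) :
    aff w a (u ++ v) = aff w a u + wt w u * aff w a v := by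
  induction u with
  | nil => simp [aff, wt]
  | cons i u ih => simp only [List.cons_append, aff, wt, ih]; ring

theorem aff_ap {ι κ : Type} (α : ι → List κ) (w a : κ → ℝ) (u : List ι) :
    aff w a (ap α u) = aff (fun i => wt w (α i)) (fun i => aff w a (α i)) u := by
  induction u with
  | nil => rfl
  | cons i u ih => simp [ap, aff, aff_append, ih]

theorem aff_linear {ι κ : Type} [Fintype κ] (w : ι → ℝ) (g : κ → ℝ) (c : κ → ι → ℝ)
    (u : List ι) :
    aff w (fun i => ∑ j, g j * c j i) u = ∑ j, g j * aff w (c j) u := by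
  induction u with
  | nil => simp [aff]
  | cons i u ih =>
    simp only [aff, ih, mul_add, Finset.sum_add_distrib, Finset.mul_sum]
    congr 1
    exact Finset.sum_congr rfl fun j _ => by ring

theorem aff_basis {ι : Type} [Fintype ι] [DecidableEq ι] (w b : ι → ℝ) (u : List ι) :
    aff w b u = ∑ j, b j * aff w (Pi.single j 1) u := by
  rw [← aff_linear]
  congr 1
  funext i
  simp [Pi.single_apply]

theorem wt_one {ι : Type} (u : List ι) : wt (fun _ => 1) u = 1 := by
  induction u with
  | nil => rfl
  | cons i u ih => simp [wt, ih]

theorem aff_one_count {ι : Type} [DecidableEq ι] (x : ι) (u : List ι) :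
    aff (fun _ => 1) (Pi.single x 1) u = u.count x := by
  induction u with
  | nil => simp [aff]
  | cons i u ih =>
    by_cases hx : i = x
    · subst hx; simp [aff, ih, add_comm]
    · simp [aff, ih, hx]

theorem aff_one_length {ι β : Type} (h : ι → List β) (u : List ι) :
    aff (fun _ => 1) (fun i => ((h i).length : ℝ)) u = (ap h u).length := by
  induction u with
  | nil => simp [aff, ap]
  | cons i u ih => simp [aff, ap, ih]

theorem wt_rpow {ι : Type} (q : ℝ) (hq : 0 < q) (v : ι → ℝ) (u : List ι) :
    wt (fun j => q ^ v j) u = q ^ aff (fun _ => 1) v u := by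
  induction u with
  | nil => simp [aff, wt]
  | cons i u ih => simp [aff, wt, ih, Real.rpow_add hq]

theorem aff_continuousAt {ι : Type} (w : ℝ → ι → ℝ) (a : ι → ℝ) (q : ℝ)
    (hw : ∀ i, ContinuousAt (fun q => w q i) q) (u : List ι) :
    ContinuousAt (fun q => aff (w q) a u) q := by
  induction u with
  | nil => exact continuousAt_const
  | cons i u ih => exact continuousAt_const.add ((hw i).mul ih)

/-- The polynomial of a word, over the reals. -/
noncomputable def pol : List ℕ → ℝ[X]
  | [] => 0
  | a :: u => C (a : ℝ) + X * pol u

theorem pol_append (u v : List ℕ) : pol (u ++ v) = pol u + X ^ u.length * pol v := by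
  induction u with
  | nil => simp [pol]
  | cons i u ih => simp only [List.cons_append, pol, ih, List.length_cons]; ring

theorem pol_inj (u v : List ℕ) (hu : ∀ a ∈ u, 0 < a) (hv : ∀ a ∈ v, 0 < a)
    (h : pol u = pol v) : u = v := by
  induction u generalizing v with
  | nil =>
    cases v with
    | nil => rfl
    | cons b v =>
      have h0 := congrArg (fun p => p.coeff 0) h
      have := hv b (by simp)
      simp [pol] at h0
      exact absurd h0.symm (by positivity)
  | cons a u ih =>
    cases v with
    | nil =>
      have h0 := congrArg (fun p => p.coeff 0) h
      have := hu a (by simp)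
      simp [pol] at h0
      omega
    | cons b v =>
      have h0 := congrArg (fun p => p.coeff 0) h
      simp [pol] at h0
      subst h0
      simp only [pol, add_right_inj] at h
      have h1 := mul_left_cancel₀ X_ne_zero h
      rw [ih v (fun a ha => hu a (by simp [ha])) (fun a ha => hv a (by simp [ha])) h1]

theorem pol_ap {ι : Type} (h : ι → List ℕ) (q : ℝ) (u : List ι) :
    (pol (ap h u)).eval q
      = aff (fun i => q ^ (h i).length) (fun i => (pol (h i)).eval q) u := by
  induction u with
  | nil => simp [ap, pol, aff]
  | cons i u ih => simp [ap, pol_append, aff, ih]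

theorem ap_inj {ι β : Type} (h : ι → List β) (hne : ∀ i, h i ≠ [])
    (hp : ∀ x y, x ≠ y → ¬ h x <+: h y) : Function.Injective (ap h) := by
  intro u
  induction u with
  | nil =>
    intro v hv
    cases v with
    | nil => rfl
    | cons j v => simp [ap, hne] at hv
  | cons i u ih =>
    intro v hv
    cases v with
    | nil => simp [ap, hne] at hv
    | cons j v =>
      have hij : i = j := by
        by_contra hij
        simp only [ap] at hv
        rcases List.prefix_or_prefix_of_prefix (List.prefix_append (h i) (ap h u))
          (hv ▸ List.prefix_append (h j) (ap h v)) with h1 | h1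
        · exact hp _ _ hij h1
        · exact hp _ _ (Ne.symm hij) h1
      subst hij
      simp only [ap, List.append_cancel_left_eq] at hv
      rw [ih hv]

theorem factor (m : ℕ) : ∀ (ι : Type) [Fintype ι] (h : ι → List ℕ),
    (∑ i, ((h i).length + 1)) ≤ m →
    ∃ (κ : Type) (_ : Fintype κ) (α : ι → List κ) (θ : κ → List ℕ),
      (∀ i, h i = ap θ (α i)) ∧ Function.Injective (ap θ) ∧
      ∀ v : κ → ℝ, (∀ i, aff (fun _ => 1) v (α i) = 0) → v = 0 := by
  classical
  induction m with
  | zero =>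
    intro ι _ h hm
    have : IsEmpty ι := by
      constructor
      intro i
      have := Finset.single_le_sum (f := fun i => (h i).length + 1) (fun _ _ => Nat.zero_le _)
        (Finset.mem_univ i)
      omega
    refine ⟨ι, inferInstance, fun i => [i], h, fun i => isEmptyElim i, ?_, ?_⟩
    · intro u v _
      cases u with
      | nil => cases v with
        | nil => rfl
        | cons i _ => exact isEmptyElim i
      | cons i _ => exact isEmptyElim i
    · intro v _
      funext i
      exact isEmptyElim i
  | succ m IH =>
    intro ι _ h hm
    -- a reduction step suffices
    have step : ∀ (ι' : Type) [Fintype ι'] (β : ι → List ι') (h' : ι' → List ℕ),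
        (∀ i, h i = ap h' (β i)) → (∑ i, ((h' i).length + 1)) ≤ m →
        (∀ v : ι' → ℝ, (∀ i, aff (fun _ => 1) v (β i) = 0) → v = 0) →
        ∃ (κ : Type) (_ : Fintype κ) (α : ι → List κ) (θ : κ → List ℕ),
          (∀ i, h i = ap θ (α i)) ∧ Function.Injective (ap θ) ∧
          ∀ v : κ → ℝ, (∀ i, aff (fun _ => 1) v (α i) = 0) → v = 0 := by
      intro ι' _ β h' hf hm' hβ
      obtain ⟨κ, _, α, θ, h1, h2, h3⟩ := IH ι' h' hm'
      refine ⟨κ, inferInstance, fun i => ap α (β i), θ, ?_, h2, ?_⟩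
      · intro i
        rw [ap_ap, hf]
        congr 1
        funext j
        exact h1 j
      · intro v hv
        apply h3
        intro i
        have := hβ (fun i => aff (fun _ => 1) v (α i)) (fun i => by
          have := hv i
          rw [aff_ap] at this
          simpa [wt_one] using this)
        exact congrFun this i
    by_cases hne : ∃ x, h x = []
    · obtain ⟨x, hx⟩ := hne
      refine step {i // i ≠ x} (fun i => if hi : i = x then [] else [⟨i, hi⟩])
        (fun i => h i) ?_ ?_ ?_
      · intro i
        by_cases hi : i = x
        · subst hi; simp [ap, hx]
        · simp [hi, ap]
      · have := Fintype.sum_eq_add_sum_subtype_ne (fun i => (h i).length + 1) x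
        omega
      · intro v hv
        funext i
        have := hv i.1
        simpa [i.2, aff] using this
    · push Not at hne
      by_cases hp : ∃ x y, x ≠ y ∧ h x <+: h y
      · obtain ⟨x, y, hxy, t, ht⟩ := hp
        refine step ι (fun i => if i = y then [x, y] else [i]) (Function.update h y t) ?_ ?_ ?_
        · intro i
          by_cases hi : i = y
          · subst hi; simp [ap, hxy, ht]
          · simp [hi, ap]
        · refine Nat.le_of_lt_succ (lt_of_lt_of_le ?_ hm)
          have hl : t.length < (h y).length := by
            rw [← ht, List.length_append]
            have := List.length_pos_iff.2 (hne x)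
            omega
          apply Finset.sum_lt_sum
          · intro i _
            by_cases hi : i = y
            · subst hi; simp; omega
            · simp [hi]
          · exact ⟨y, Finset.mem_univ _, by simpa using hl⟩
        · intro v hv
          have key : ∀ i, i ≠ y → v i = 0 := by
            intro i hi
            have := hv i
            simpa [hi, aff] using this
          funext i
          by_cases hi : i = y
          · subst hi
            have := hv i
            simpa [aff, key x hxy] using this
          · exact key i hi
      · push Not at hp
        refine ⟨ι, inferInstance, fun i => [i], h, fun i => by simp [ap], ap_inj h hne hp, ?_⟩
        intro v hv
        funext i
        simpa [aff] using hv i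

theorem lin_lemma {ι κ : Type} [Fintype ι] [Fintype κ] (c : κ → ι → ℝ)
    (hc : LinearIndependent ℝ c) (hcard : Fintype.card ι ≤ Fintype.card κ + 1)
    (d : ι → ℝ) (hd : d ≠ 0) (hdc : ∀ j, ∑ i, c j i * d i = 0)
    (a : ι → ℝ) (ha : ∑ i, a i * d i = 0) :
    ∃ b : κ → ℝ, ∀ i, a i = ∑ j, b j * c j i := by
  classical
  let φ : (ι → ℝ) →ₗ[ℝ] ℝ := Fintype.linearCombination ℝ d
  have hφ : ∀ a, φ a = ∑ i, a i * d i := fun a => by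
    simp [φ, Fintype.linearCombination_apply]
  have hne : φ ≠ 0 := by
    intro h0
    apply hd
    funext i
    have := LinearMap.congr_fun h0 (Pi.single i 1)
    rw [hφ] at this
    simpa [Pi.single_apply] using this
  have hle : Submodule.span ℝ (Set.range c) ≤ LinearMap.ker φ := by
    rw [Submodule.span_le]
    rintro _ ⟨j, rfl⟩
    simp [hφ, hdc j]
  have hr := LinearMap.finrank_range_add_finrank_ker φ
  have hrange : LinearMap.range φ = ⊤ := LinearMap.range_eq_top.2 (LinearMap.surjective hne)
  rw [hrange, finrank_top, Module.finrank_self, Module.finrank_fintype_fun_eq_card] at hr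
  have heq := Submodule.eq_of_le_of_finrank_le hle (by
    rw [finrank_span_eq_card hc]; omega)
  have hmem : a ∈ Submodule.span ℝ (Set.range c) := by
    rw [heq, LinearMap.mem_ker, hφ, ha]
  obtain ⟨b, hb⟩ := (Submodule.mem_span_range_iff_exists_fun ℝ).1 hmem
  refine ⟨b, fun i => ?_⟩
  rw [← hb]
  simp

/-- An affine solution of an equation satisfied by `α` factors through `α`. -/
theorem affine_factor {ι κ : Type} [Fintype ι] [Fintype κ] [DecidableEq ι] [DecidableEq κ]
    (α : ι → List κ) (u v : List ι)
    (huv : ap α u = ap α v) (hcard : Fintype.card ι ≤ Fintype.card κ + 1) (ω : κ → ℝ)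
    (hc : LinearIndependent ℝ (fun (j : κ) (i : ι) => aff ω (Pi.single j 1) (α i)))
    (w : ι → ℝ) (hw : ∀ i, wt ω (α i) = w i) (x : ι)
    (hx : aff w (Pi.single x 1) u ≠ aff w (Pi.single x 1) v)
    (a : ι → ℝ) (ha : aff w a u = aff w a v) :
    ∃ b : κ → ℝ, ∀ i, a i = aff ω b (α i) := by
  have hw' : (fun i => wt ω (α i)) = w := funext hw
  have hdiff : ∀ a : ι → ℝ, ∑ i, a i * (aff w (Pi.single i 1) u - aff w (Pi.single i 1) v)
      = aff w a u - aff w a v := by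
    intro a
    rw [aff_basis w a u, aff_basis w a v, ← Finset.sum_sub_distrib]
    exact Finset.sum_congr rfl fun i _ => by ring
  obtain ⟨b, hb⟩ := lin_lemma _ hc hcard
    (fun i => aff w (Pi.single i 1) u - aff w (Pi.single i 1) v)
    (fun h0 => hx (sub_eq_zero.1 (congrFun h0 x)))
    (fun j => by
      rw [hdiff, ← hw', ← aff_ap, ← aff_ap, huv, sub_self])
    a (by rw [hdiff, ha, sub_self])
  exact ⟨b, fun i => by rw [hb, aff_basis ω b]⟩

theorem inStar_ap {κ : Type} [Fintype κ] [DecidableEq κ] (θ : κ → List ℕ) (u : List κ) :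
    InStar (Finset.univ.image θ) (ap θ u) := by
  refine ⟨u.map θ, ?_, ?_⟩
  · intro w hw
    obtain ⟨j, _, rfl⟩ := List.mem_map.1 hw
    simp
  · induction u with
    | nil => rfl
    | cons i u ih => simpa [ap] using ih

theorem mem_ap {ι : Type} (h : ι → List ℕ) (A : Finset ℕ) (hA : ∀ i, ∀ a ∈ h i, a ∈ A)
    (u : List ι) : ∀ a ∈ ap h u, a ∈ A := by
  induction u with
  | nil => simp [ap]
  | cons i u ih =>
    intro a ha
    rcases List.mem_append.1 ha with h1 | h1
    · exact hA i a h1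
    · exact ih a h1

/-- Let `E₁, E₂` be a pair of word equations on `n` unknowns having a common solution of
rank `n − 1`. If `E₁` is not balanced, then every solution of `E₁` of rank `n − 1` is also
a solution of `E₂`. -/
theorem unbalanced_implies_subset {n : ℕ}
    (A : Finset ℕ) (hA : ∀ a ∈ A, 0 < a)
    (e₁ e₂ : List (Fin n) × List (Fin n))
    (hcommon : ∃ h : Fin n → List ℕ, IntoAlph A h ∧
      mApply h e₁.1 = mApply h e₁.2 ∧ mApply h e₂.1 = mApply h e₂.2 ∧ mRank h = n - 1)
    (hunbal : ∃ x : Fin n, e₁.1.count x ≠ e₁.2.count x) :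
    ∀ h : Fin n → List ℕ, IntoAlph A h → mApply h e₁.1 = mApply h e₁.2 →
      mRank h = n - 1 → mApply h e₂.1 = mApply h e₂.2 := by
  classical
  obtain ⟨u₁, v₁⟩ := e₁
  obtain ⟨u₂, v₂⟩ := e₂
  obtain ⟨g, _, hg1, hg2, hrank⟩ := hcommon
  obtain ⟨x, hx⟩ := hunbal
  intro h hh h1 _
  simp only [mApply_eq_ap] at *
  obtain ⟨κ, _, α, θ, hgα, hθ, hα⟩ := factor _ (Fin n) g le_rfl
  have hg' : g = fun i => ap θ (α i) := funext hgα
  have hα1 : ap α u₁ = ap α v₁ := hθ (by rw [ap_ap, ap_ap, ← hg', hg1])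
  have hα2 : ap α u₂ = ap α v₂ := hθ (by rw [ap_ap, ap_ap, ← hg', hg2])
  have hcard : Fintype.card (Fin n) ≤ Fintype.card κ + 1 := by
    have h0 : mRank g ≤ (Finset.univ.image θ).card :=
      Nat.sInf_le ⟨_, rfl, fun i => by rw [hgα]; exact inStar_ap θ _⟩
    have h2 : (Finset.univ.image θ).card ≤ Fintype.card κ := Finset.card_image_le
    rw [Fintype.card_fin]
    omega
  -- independence at `q = 1`
  have hc1 : LinearIndependent ℝ
      (fun (j : κ) (i : Fin n) => aff (fun _ => 1) (Pi.single j 1) (α i)) := by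
    rw [Fintype.linearIndependent_iff]
    intro b hb j
    have : b = 0 := hα b fun i => by
      rw [aff_basis]
      have := congrFun hb i
      simpa using this
    rw [this]; rfl
  have hx1 : aff (fun _ => 1) (Pi.single x 1) u₁ ≠ aff (fun _ => 1) (Pi.single x 1) v₁ := by
    rw [aff_one_count, aff_one_count]
    exact_mod_cast hx
  obtain ⟨v, hv⟩ := affine_factor α u₁ v₁ hα1 hcard (fun _ => 1) hc1 (fun _ => 1)
    (fun i => wt_one _) x hx1 (fun i => ((h i).length : ℝ))
    (by rw [aff_one_length, aff_one_length, h1])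
  have hω : ∀ j, ContinuousAt (fun q : ℝ => q ^ v j) 1 := fun j =>
    Real.continuousAt_rpow_const _ _ (Or.inl one_ne_zero)
  -- independence near `q = 1`
  have hcq : ∀ᶠ q : ℝ in nhds 1, LinearIndependent ℝ
      (fun (j : κ) (i : Fin n) => aff (fun j => q ^ v j) (Pi.single j 1) (α i)) := by
    have hcont : ContinuousAt (fun (q : ℝ) (j : κ) (i : Fin n) =>
        aff (fun j => q ^ v j) (Pi.single j 1) (α i)) 1 := by
      rw [continuousAt_pi]; intro j
      rw [continuousAt_pi]; intro i
      exact aff_continuousAt (fun (q : ℝ) j => q ^ v j) _ 1 hω _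
    refine hcont.eventually (p := fun f => LinearIndependent ℝ f) ?_
    refine isOpen_setOfPred_linearIndependent.eventually_mem ?_
    simpa using hc1
  have hxq : ∀ᶠ q : ℝ in nhds 1, aff (fun i => q ^ (h i).length) (Pi.single x 1) u₁
      ≠ aff (fun i => q ^ (h i).length) (Pi.single x 1) v₁ := by
    have hw : ∀ i, ContinuousAt (fun q : ℝ => q ^ (h i).length) 1 := fun i => by fun_prop
    have hcont := fun u => aff_continuousAt (fun (q : ℝ) i => q ^ (h i).length)
      (Pi.single x 1) 1 hw u
    refine ((hcont u₁).sub (hcont v₁)).eventually_ne (y := 0) ?_ |>.mono fun q hq => ?_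
    · simpa [sub_eq_zero] using hx1
    · exact fun h0 => hq (by simp [h0])
  have hev : ∀ᶠ q : ℝ in nhds 1, (pol (ap h u₂)).eval q = (pol (ap h v₂)).eval q := by
    filter_upwards [hcq, hxq, lt_mem_nhds (zero_lt_one : (0 : ℝ) < 1)] with q hq1 hq2 hq3
    have hw : ∀ i, wt (fun j => q ^ v j) (α i) = q ^ (h i).length := fun i => by
      rw [wt_rpow q hq3, ← hv i, Real.rpow_natCast]
    obtain ⟨b, hb⟩ := affine_factor α u₁ v₁ hα1 hcard (fun j => q ^ v j) hq1
      (fun i => q ^ (h i).length) hw x hq2 (fun i => (pol (h i)).eval q)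
      (by rw [← pol_ap, ← pol_ap, h1])
    rw [pol_ap, pol_ap]
    have e1 : (fun i => (pol (h i)).eval q) = fun i => aff (fun j => q ^ v j) b (α i) :=
      funext hb
    have e2 : (fun i => q ^ (h i).length) = fun i => wt (fun j => q ^ v j) (α i) :=
      funext fun i => (hw i).symm
    rw [e1, e2, ← aff_ap, ← aff_ap, hα2]
  apply pol_inj
  · exact fun a ha => hA a (mem_ap h A hh _ a ha)
  · exact fun a ha => hA a (mem_ap h A hh _ a ha)
  · exact Polynomial.eq_of_infinite_eval_eq _ _ (infinite_of_mem_nhds 1 hev)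
end

section
/- Let g, h: Ξ* → Σ* be morphisms on n unknowns, both of rank n − 1, and suppose the entire systems K_g and K_h are different. Then every word equation that is satisfied by both g and h (i.e., every equation in K_g ∩ K_h) is balanced. -/
open Polynomial

namespace CEB

/-- Weighted derivation of a word. -/
noncomputable def D {α : Type*} (τ c : α → ℝ) : List α → ℝ
  | [] => 0
  | a :: w => c a + τ a * D τ c w

theorem D_append {α : Type*} (τ c : α → ℝ) (u v : List α) :
    D τ c (u ++ v) = D τ c u + (u.map τ).prod * D τ c v := by
  induction u with
  | nil => simp [D]
  | cons a u ih => simp only [List.cons_append, D, ih, List.map_cons, List.prod_cons]; ring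

theorem D_flatMap {ι α : Type*} (τ c : α → ℝ) (σ : ι → ℝ) (f : ι → List α)
    (hσ : ∀ i, ((f i).map τ).prod = σ i) (u : List ι) :
    D τ c (u.flatMap f) = D σ (fun i => D τ c (f i)) u := by
  induction u with
  | nil => simp [D]
  | cons a u ih => simp only [List.flatMap_cons, D_append, D, ih, hσ]

theorem D_sum {ι : Type*} [Fintype ι] [DecidableEq ι] (σ c : ι → ℝ) (u : List ι) :
    D σ c u = ∑ x, c x * D σ (fun i => if i = x then 1 else 0) u := by
  induction u with
  | nil => simp [D]
  | cons a u ih =>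
    simp only [D, ih, mul_add, Finset.sum_add_distrib, Finset.mul_sum]
    congr 1
    · simp
    · apply Finset.sum_congr rfl; intros; ring

theorem D_one {α : Type*} [DecidableEq α] (x : α) (u : List α) :
    D (fun _ => 1) (fun i => if i = x then 1 else 0) u = (u.count x : ℝ) := by
  induction u with
  | nil => simp [D]
  | cons a u ih =>
    simp only [D, ih, List.count_cons, beq_iff_eq]
    push_cast
    ring

theorem D_cont {α : Type*} (τ : ℝ → α → ℝ) (hτ : ∀ a, Continuous fun s => τ s a)
    (c : α → ℝ) (u : List α) : Continuous fun s => D (τ s) c u := by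
  induction u with
  | nil => simpa [D] using continuous_const
  | cons a u ih => exact continuous_const.add ((hτ a).mul ih)

/-- Word polynomial over the reals, recursively. -/
noncomputable def WP : List ℕ → Polynomial ℝ
  | [] => 0
  | a :: w => Polynomial.C (a : ℝ) + Polynomial.X * WP w

theorem WP_eval (t : ℝ) (w : List ℕ) : (WP w).eval t = D (fun _ => t) (fun a : ℕ => (a : ℝ)) w := by
  induction w with
  | nil => simp [WP, D]
  | cons a w ih => simp [WP, D, ih]

theorem WP_inj : ∀ (u v : List ℕ), (∀ a ∈ u, 0 < a) → (∀ a ∈ v, 0 < a) → WP u = WP v → u = v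
  | [], [], _, _, _ => rfl
  | [], b :: v, _, hv, h => by
    have := congrArg (fun p => Polynomial.coeff p 0) h
    have hb := hv b (by simp)
    simp [WP] at this
    exact absurd (by exact_mod_cast this.symm : b = 0) (by omega)
  | a :: u, [], hu, _, h => by
    have := congrArg (fun p => Polynomial.coeff p 0) h
    have hb := hu a (by simp)
    simp [WP] at this
    omega
  | a :: u, b :: v, hu, hv, h => by
    have h0 := congrArg (fun p => Polynomial.coeff p 0) h
    simp [WP] at h0
    subst h0
    have h1 : WP u = WP v := by
      simp only [WP, add_right_inj] at h
      exact mul_left_cancel₀ Polynomial.X_ne_zero h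
    rw [WP_inj u v (fun x hx => hu x (by simp [hx])) (fun x hx => hv x (by simp [hx])) h1]

theorem split_first {ι : Type*} (g : ι → List ℕ) (hne : ∀ x, g x ≠ []) :
    ∀ u v : List ι, u ≠ v → u.flatMap g = v.flatMap g →
      ∃ x y s, x ≠ y ∧ g y = g x ++ s
  | [], [], h, _ => absurd rfl h
  | [], b :: v, _, h => by simp [hne] at h
  | a :: u, [], _, h => by simp [hne] at h
  | a :: u, b :: v, hn, h => by
    by_cases hab : a = b
    · subst hab
      simp only [List.flatMap_cons, List.append_cancel_left_eq] at h
      exact split_first g hne u v (by simpa using hn) h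
    · simp only [List.flatMap_cons] at h
      rcases List.append_eq_append_iff.1 h with ⟨s, hs, -⟩ | ⟨s, hs, -⟩
      · exact ⟨a, b, s, hab, hs⟩
      · exact ⟨b, a, s, Ne.symm hab, hs⟩

theorem flatMap_inj {ι : Type*} (f p : ι → List ι) (hf : ∀ z, f z = p z ++ [z]) (u : List ι) :
    ∀ v : List ι, u.flatMap f = v.flatMap f → u = v := by
  induction u using List.reverseRecOn with
  | nil =>
    intro v h
    rcases List.eq_nil_or_concat v with rfl | ⟨v, b, rfl⟩
    · rfl
    · simp [hf] at h
  | append_singleton u a ih =>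
    intro v h
    rcases List.eq_nil_or_concat v with rfl | ⟨v, b, rfl⟩
    · simp [hf] at h
    · simp only [List.concat_eq_append, List.flatMap_append, List.flatMap_cons, List.flatMap_nil,
        List.append_nil] at h ⊢
      have hab : a = b := by
        have := h
        rw [hf a, hf b, ← List.append_assoc, ← List.append_assoc] at this
        have := (List.append_inj' this rfl).2
        simpa using this
      subst hab
      rw [ih v (List.append_cancel_right h)]

theorem defect {ι : Type*} [Fintype ι] [DecidableEq ι] (N : ℕ) :
    ∀ (g : ι → List ℕ), ∑ i, (g i).length ≤ N → ∀ u v : List ι, u ≠ v →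
      u.flatMap g = v.flatMap g →
      ∃ (θ : ι → List ι) (β : ι → List ℕ) (x0 : ι), β x0 = [] ∧
        (∀ i, (θ i).flatMap β = g i) ∧
        ∀ Y : ι → ℝ, (∀ a, ∑ x, Y x * ((θ x).count a : ℝ) = 0) → ∀ x, Y x = 0 := by
  induction N with
  | zero =>
    intro g hN u v huv h
    have hz : ∀ i, g i = [] := by
      intro i
      have := Finset.sum_eq_zero_iff.1 (Nat.le_zero.1 hN) i (Finset.mem_univ i)
      simpa using this
    obtain ⟨x0⟩ : Nonempty ι := by
      by_contra hc
      rw [not_nonempty_iff] at hc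
      exact huv (Subsingleton.elim _ _)
    refine ⟨fun i => [i], g, x0, hz x0, by simp, ?_⟩
    intro Y hY x
    simpa [List.count_singleton] using hY x
  | succ N ih =>
    intro g hN u v huv h
    by_cases hne : ∃ x, g x = []
    · obtain ⟨x0, hx0⟩ := hne
      refine ⟨fun i => [i], g, x0, hx0, by simp, ?_⟩
      intro Y hY x
      simpa [List.count_singleton] using hY x
    · push Not at hne
      obtain ⟨x, y, s, hxy, hs⟩ := split_first g hne u v huv h
      let φ : ι → List ι := fun z => (if z = y then [x] else []) ++ [z]
      let g' : ι → List ℕ := Function.update g y s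
      have hφ : ∀ z, (φ z).flatMap g' = g z := by
        intro z
        by_cases hz : z = y
        · subst hz
          simp [φ, g', hxy, hs]
        · simp [φ, g', hz]
      have hlen : ∑ i, (g' i).length ≤ N := by
        have hlt : ∑ i, (g' i).length < ∑ i, (g i).length := by
          have hpos : 0 < (g x).length := List.length_pos_iff.2 (hne x)
          apply Finset.sum_lt_sum
          · intro i _
            by_cases hi : i = y
            · subst hi; simp [g', hs]
            · simp [g', hi]
          · exact ⟨y, Finset.mem_univ y, by simp only [g', hs, Function.update_self, List.length_append]; omega⟩
        omega
      have hmm : ∀ w : List ι, (w.flatMap φ).flatMap g' = w.flatMap g := by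
        intro w
        rw [List.flatMap_assoc]
        simp only [hφ]
      obtain ⟨θ, β, x0, hb, hθ, hY⟩ := ih g' hlen (u.flatMap φ) (v.flatMap φ)
        (fun hc => huv (flatMap_inj φ _ (fun _ => rfl) u v hc)) (by rw [hmm, hmm, h])
      refine ⟨fun z => (φ z).flatMap θ, β, x0, hb, ?_, ?_⟩
      · intro i
        rw [List.flatMap_assoc]
        simp only [hθ, hφ]
      · intro Y h0
        have key := hY (fun z => Y z + if z = x then Y y else 0) (by
          intro a
          refine Eq.trans ?_ (h0 a)
          have hc : ∀ z, (((φ z).flatMap θ).count a : ℝ) =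
              ((θ z).count a : ℝ) + if z = y then ((θ x).count a : ℝ) else 0 := by
            intro z
            by_cases hz : z = y
            · simp [φ, hz, add_comm]
            · simp [φ, hz]
          simp only [hc, add_mul, mul_add, Finset.sum_add_distrib, ite_mul, mul_ite, zero_mul,
            mul_zero, Finset.sum_ite_eq', Finset.mem_univ, if_true])
        intro z
        have hy0 : Y y = 0 := by simpa [Ne.symm hxy] using key y
        simpa [hy0] using key z

theorem factor {n : ℕ} (g : Fin n → List ℕ) (hrg : mRank g = n - 1) (u v : List (Fin n))
    (huv : u ≠ v) (h : u.flatMap g = v.flatMap g) :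
    ∃ (θ : Fin n → List (Fin n)) (x0 : Fin n), 
      (∀ u' v' : List (Fin n), u'.flatMap g = v'.flatMap g →
        u'.flatMap (fun i => (θ i).filter (· ≠ x0)) = v'.flatMap (fun i => (θ i).filter (· ≠ x0))) ∧
        ∀ Y : Fin n → ℝ, (∀ a, ∑ x, Y x * ((θ x).count a : ℝ) = 0) → ∀ x, Y x = 0 := by
  obtain ⟨θ, β, x0, hb, hθ, hY⟩ := defect _ g le_rfl u v huv h
  refine ⟨θ, x0, ?_, hY⟩
  intro u' v' h'
  by_contra hc
  let ι := {x : Fin n // x ≠ x0}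
  let γ : ι → List ℕ := fun i => β i.1
  let r : Fin n → List ι := fun i => if hi : i ≠ x0 then [⟨i, hi⟩] else []
  have hr : ∀ i, (r i).flatMap γ = β i := by
    intro i
    by_cases hi : i = x0
    · subst hi; simp [r, hb]
    · simp [r, hi, γ]
  have hfil : ∀ w : List (Fin n), w.filter (· ≠ x0) = (w.flatMap r).map (fun i => i.1) := by
    intro w
    induction w with
    | nil => simp
    | cons a w ih =>
      by_cases ha : a = x0
      · subst ha
        simpa [r] using ih
      · simpa [r, ha] using ih
  have hfl : ∀ w : List (Fin n), w.flatMap (fun i => (θ i).filter (· ≠ x0)) =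
      ((w.flatMap (fun i => (θ i).flatMap r))).map (fun i => i.1) := by
    intro w
    simp only [hfil, List.map_flatMap]
  have hg : ∀ w : List (Fin n), (w.flatMap (fun i => (θ i).flatMap r)).flatMap γ = w.flatMap g := by
    intro w
    rw [List.flatMap_assoc]
    congr 1
    funext i
    rw [List.flatMap_assoc]
    simp only [hr, hθ]
  obtain ⟨θ', β', x1, hb', hθ', -⟩ := defect _ γ le_rfl
    (u'.flatMap (fun i => (θ i).flatMap r)) (v'.flatMap (fun i => (θ i).flatMap r))
    (fun he => hc (by rw [hfl, hfl, he])) (by rw [hg, hg, h'])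
  let B : Finset (List ℕ) := (Finset.univ.erase x1).image β'
  have hle : mRank g ≤ B.card := by
    apply Nat.sInf_le
    refine ⟨B, rfl, ?_⟩
    intro i
    refine ⟨(((θ i).flatMap r).flatMap θ' |>.filter (· ≠ x1)).map β', ?_, ?_⟩
    · intro w hw
      simp only [List.mem_map, List.mem_filter, decide_eq_true_eq] at hw
      obtain ⟨z, ⟨-, hz⟩, rfl⟩ := hw
      exact Finset.mem_image_of_mem _ (by simp [hz])
    · have hf : ∀ w : List ι, ((w.filter (· ≠ x1)).map β').flatten = w.flatMap β' := by
        intro w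
        induction w with
        | nil => simp
        | cons a w ih =>
          by_cases ha : a = x1
          · subst ha; simpa [hb'] using ih
          · simpa [ha] using ih
      rw [hf, List.flatMap_assoc]
      simp only [hθ']
      rw [List.flatMap_assoc]
      simp only [hr, hθ]
  have hcard : B.card ≤ Fintype.card ι - 1 := by
    refine Finset.card_image_le.trans ?_
    rw [Finset.card_erase_of_mem (Finset.mem_univ _), Finset.card_univ]
  have hι : Fintype.card ι = n - 1 := by
    simp [ι, Fintype.card_subtype_compl]
  have hpos : 0 < Fintype.card ι := Fintype.card_pos_iff.2 ⟨x1⟩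
  omega

theorem dot_sum {n : ℕ} {α : Type*} (τ c : α → ℝ) (σ : Fin n → ℝ) (f : Fin n → List α)
    (hσ : ∀ i, ((f i).map τ).prod = σ i) (u v : List (Fin n)) (h : u.flatMap f = v.flatMap f) :
    ∑ x, D τ c (f x) * (D σ (fun i => if i = x then 1 else 0) u
      - D σ (fun i => if i = x then 1 else 0) v) = 0 := by
  simp only [mul_sub, Finset.sum_sub_distrib]
  rw [← D_sum σ (fun x => D τ c (f x)), ← D_sum σ (fun x => D τ c (f x)), ← D_flatMap τ c σ f hσ,
    ← D_flatMap τ c σ f hσ, h, sub_self]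

theorem D_len {α : Type*} (u : List α) :
    D (fun _ => 1) (fun _ => 1) u = (u.length : ℝ) := by
  induction u with
  | nil => simp [D]
  | cons a u ih => simp [D, ih, add_comm]

theorem prod_exp {n : ℕ} (s : ℝ) (w : Fin n → ℝ) (l : List (Fin n)) :
    (l.map (fun a => Real.exp (s * w a))).prod = Real.exp (s * ∑ a, w a * (l.count a : ℝ)) := by
  induction l with
  | nil => simp
  | cons b l ih =>
    have : ∑ a, w a * ((b :: l).count a : ℝ) = w b + ∑ a, w a * (l.count a : ℝ) := by
      simp [List.count_cons, mul_add, Finset.sum_add_distrib, add_comm]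
    rw [List.map_cons, List.prod_cons, ih, ← Real.exp_add, this, mul_add]

theorem lin1 {n : ℕ} (C : Fin n → Fin n → ℝ)
    (hC : ∀ Y : Fin n → ℝ, (∀ a, ∑ x, Y x * C a x = 0) → ∀ x, Y x = 0) (x0 : Fin n)
    (d : Fin n → ℝ) (hd : ∀ a, a ≠ x0 → ∑ x, d x * C a x = 0) (hd0 : ∃ x, d x ≠ 0) :
    (Matrix.of fun a x => if a = x0 then d x else C a x).det ≠ 0 := by
  intro hdet
  obtain ⟨y, hy0, hy⟩ := Matrix.exists_mulVec_eq_zero_iff.2 hdet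
  have hrow : ∀ a, ∑ x, (if a = x0 then d x else C a x) * y x = 0 := fun a => congrFun hy a
  have hdy : ∑ x, d x * y x = 0 := by simpa using hrow x0
  have hya : ∀ a, a ≠ x0 → ∑ x, y x * C a x = 0 := by
    intro a ha
    have := hrow a
    simp only [ha, if_false] at this
    rw [← this]
    exact Finset.sum_congr rfl fun x _ => mul_comm _ _
  set α := ∑ x, d x * C x0 x with hα
  set β := ∑ x, y x * C x0 x with hβ
  have hα0 : α ≠ 0 := by
    intro h0
    obtain ⟨x, hx⟩ := hd0
    refine hx (hC d ?_ x)
    intro a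
    by_cases ha : a = x0
    · rw [ha, ← hα, h0]
    · exact hd a ha
  have hprop : ∀ x, y x * α - d x * β = 0 := by
    apply hC
    intro a
    have : ∑ x, (y x * α - d x * β) * C a x =
        α * ∑ x, y x * C a x - β * ∑ x, d x * C a x := by
      rw [Finset.mul_sum, Finset.mul_sum, ← Finset.sum_sub_distrib]
      exact Finset.sum_congr rfl fun x _ => by ring
    rw [this]
    by_cases ha : a = x0
    · rw [ha, ← hα, ← hβ]; ring
    · rw [hya a ha, hd a ha]; ring
  have hββ : β * ∑ x, d x * d x = 0 := by
    have : α * ∑ x, d x * y x = β * ∑ x, d x * d x := by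
      rw [Finset.mul_sum, Finset.mul_sum]
      exact Finset.sum_congr rfl fun x _ => by linear_combination d x * hprop x
    rw [← this, hdy, mul_zero]
  have hdd : ∑ x, d x * d x ≠ 0 := by
    obtain ⟨x, hx⟩ := hd0
    intro h0
    have := (Finset.sum_eq_zero_iff_of_nonneg (fun i _ => mul_self_nonneg (d i))).1 h0 x
      (Finset.mem_univ x)
    exact hx (mul_self_eq_zero.1 this)
  have hβ0 : β = 0 := (mul_eq_zero.1 hββ).resolve_right hdd
  apply hy0
  funext x
  have := hprop x
  rw [hβ0, mul_zero, sub_zero] at this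
  exact (mul_eq_zero.1 this).resolve_right hα0

theorem lin2 {n : ℕ} (M : Matrix (Fin n) (Fin n) ℝ) (hM : M.det ≠ 0) (x0 : Fin n)
    (q q' p : Fin n → ℝ) (h0 : ∀ x, M x0 x = q x)
    (hq : ∀ a, a ≠ x0 → ∑ x, M a x * q x = 0) (hq' : ∀ a, a ≠ x0 → ∑ x, M a x * q' x = 0)
    (hp : ∑ x, p x * q x = 0) : ∑ x, p x * q' x = 0 := by
  set α := ∑ x, q x * q x with hα
  set β := ∑ x, q x * q' x with hβ
  have hz : (fun x => α * q' x - β * q x) = 0 := by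
    by_contra hne
    refine hM (Matrix.exists_mulVec_eq_zero_iff.1 ⟨_, hne, ?_⟩)
    funext a
    change ∑ x, M a x * (α * q' x - β * q x) = 0
    have : ∑ x, M a x * (α * q' x - β * q x) =
        α * ∑ x, M a x * q' x - β * ∑ x, M a x * q x := by
      rw [Finset.mul_sum, Finset.mul_sum, ← Finset.sum_sub_distrib]
      exact Finset.sum_congr rfl fun x _ => by ring
    rw [this]
    by_cases ha : a = x0
    · subst ha
      simp only [h0]
      rw [← hα, ← hβ]; ring
    · rw [hq a ha, hq' a ha]; ring
  have hα0 : α ≠ 0 := by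
    intro hc
    apply hM
    apply Matrix.det_eq_zero_of_row_eq_zero x0
    intro x
    rw [h0]
    exact mul_self_eq_zero.1 ((Finset.sum_eq_zero_iff_of_nonneg
      (fun i _ => mul_self_nonneg (q i))).1 hc x (Finset.mem_univ x))
  have : α * ∑ x, p x * q' x = β * ∑ x, p x * q x := by
    rw [Finset.mul_sum, Finset.mul_sum]
    refine Finset.sum_congr rfl fun x _ => ?_
    have h1 : α * q' x - β * q x = 0 := congrFun hz x
    linear_combination p x * h1
  rw [hp, mul_zero] at this
  exact (mul_eq_zero.1 this).resolve_left hα0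

theorem sub {n : ℕ} (A : Finset ℕ) (hA : ∀ a ∈ A, 0 < a)
    (g h : Fin n → List ℕ) (hh : IntoAlph A h) (hrg : mRank g = n - 1)
    (u v : List (Fin n)) (hgu : u.flatMap g = v.flatMap g) (hhu : u.flatMap h = v.flatMap h)
    (hx : ∃ x, u.count x ≠ v.count x) (u' v' : List (Fin n))
    (hg' : u'.flatMap g = v'.flatMap g) : u'.flatMap h = v'.flatMap h := by
  obtain ⟨θ, x0, hK, hY⟩ := factor g hrg u v (by rintro rfl; simp at hx) hgu
  set f : Fin n → List (Fin n) := fun i => (θ i).filter (· ≠ x0) with hf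
  have hcf : ∀ a x, a ≠ x0 → (f x).count a = (θ x).count a := by
    intro a x ha
    exact List.count_filter (by simpa using ha)
  set d : Fin n → ℝ := fun x => (u.count x : ℝ) - (v.count x : ℝ) with hd
  have hd0 : ∃ x, d x ≠ 0 := by
    obtain ⟨x, hx⟩ := hx
    refine ⟨x, fun h0 => hx ?_⟩
    have : (u.count x : ℝ) = v.count x := sub_eq_zero.1 h0
    exact_mod_cast this
  have hdC : ∀ a, a ≠ x0 → ∑ x, d x * ((θ x).count a : ℝ) = 0 := by
    intro a ha
    have := dot_sum (fun _ => 1) (fun i => if i = a then 1 else 0) (fun _ => 1) f (by simp) u v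
      (hK u v hgu)
    simp only [D_one] at this
    rw [← this]
    exact Finset.sum_congr rfl fun x _ => by rw [hcf a x ha, mul_comm]
  have hLd : ∑ x, ((h x).length : ℝ) * d x = 0 := by
    have := dot_sum (fun _ => 1) (fun _ => 1) (fun _ => 1) h (by simp) u v hhu
    simpa only [D_one, D_len] using this
  have hN := lin1 (fun a x => ((θ x).count a : ℝ)) hY x0 d hdC hd0
  set N : Matrix (Fin n) (Fin n) ℝ :=
    Matrix.of fun a x => if a = x0 then d x else ((θ x).count a : ℝ) with hNdef
  obtain ⟨w, hw⟩ : ∃ w : Fin n → ℝ, ∀ x, ∑ a, w a * N a x = ((h x).length : ℝ) := by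
    refine ⟨Matrix.vecMul (fun x => ((h x).length : ℝ)) N⁻¹, fun x => ?_⟩
    change Matrix.vecMul (Matrix.vecMul (fun x => ((h x).length : ℝ)) N⁻¹) N x = _
    rw [Matrix.vecMul_vecMul, Matrix.nonsing_inv_mul _ (isUnit_iff_ne_zero.2 hN),
      Matrix.vecMul_one]
  have hNd : ∀ a, a ≠ x0 → ∑ x, N a x * d x = 0 := by
    intro a ha
    rw [← hdC a ha]
    exact Finset.sum_congr rfl fun x _ => by simp [hNdef, ha, mul_comm]
  have hw0 : w x0 = 0 := by
    have h1 : ∑ x, ((h x).length : ℝ) * d x = ∑ a, w a * ∑ x, N a x * d x := by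
      simp only [← hw, Finset.sum_mul, Finset.mul_sum]
      rw [Finset.sum_comm]
      exact Finset.sum_congr rfl fun x _ => Finset.sum_congr rfl fun y _ => by ring
    rw [hLd, Finset.sum_eq_single x0 (fun a _ ha => by rw [hNd a ha, mul_zero]) (by simp)] at h1
    refine (mul_eq_zero.1 h1.symm).resolve_right ?_
    intro hc
    obtain ⟨x, hx⟩ := hd0
    have h2 : ∑ x, d x * d x = 0 := by
      rw [← hc]; exact Finset.sum_congr rfl fun x _ => by simp [hNdef]
    exact hx (mul_self_eq_zero.1 ((Finset.sum_eq_zero_iff_of_nonneg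
      (fun i _ => mul_self_nonneg (d i))).1 h2 x (Finset.mem_univ x)))
  have hwf : ∀ x, ∑ a, w a * ((f x).count a : ℝ) = ((h x).length : ℝ) := by
    intro x
    rw [← hw x]
    refine Finset.sum_congr rfl fun a _ => ?_
    by_cases ha : a = x0
    · rw [ha, hw0, zero_mul, zero_mul]
    · rw [hcf a x ha]; simp [hNdef, ha]
  let σ : ℝ → Fin n → ℝ := fun s x => Real.exp (s * ((h x).length : ℝ))
  let τ : ℝ → Fin n → ℝ := fun s a => Real.exp (s * w a)
  have hστ : ∀ s i, ((f i).map (τ s)).prod = σ s i := by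
    intro s i
    rw [prod_exp, hwf]
  have hσh : ∀ s i, ((h i).map (fun _ => Real.exp s)).prod = σ s i := by
    intro s i
    simp only [List.map_const', List.prod_replicate, σ]
    rw [← Real.exp_nat_mul, mul_comm]
  let Q : ℝ → List (Fin n) → List (Fin n) → Fin n → ℝ := fun s p q x =>
    D (σ s) (fun i => if i = x then 1 else 0) p - D (σ s) (fun i => if i = x then 1 else 0) q
  let M : ℝ → Matrix (Fin n) (Fin n) ℝ := fun s => Matrix.of fun a x =>
    if a = x0 then Q s u v x else D (τ s) (fun i => if i = a then 1 else 0) (f x)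
  have hσc : ∀ x, Continuous fun s => σ s x := by intro x; fun_prop
  have hτc : ∀ x, Continuous fun s => τ s x := by intro x; fun_prop
  have hMc : Continuous fun s => (M s).det := by
    apply Continuous.matrix_det
    refine continuous_matrix fun a x => ?_
    by_cases ha : a = x0
    · simp only [M, Matrix.of_apply, ha, if_true, Q]
      exact (D_cont σ hσc _ _).sub (D_cont σ hσc _ _)
    · simp only [M, Matrix.of_apply, ha, if_false]
      exact D_cont τ hτc _ _
  have hM0 : M 0 = N := by
    have hσ0 : σ 0 = fun _ => 1 := by funext x; simp [σ]
    have hτ0 : τ 0 = fun _ => 1 := by funext x; simp [τ]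
    ext a x
    by_cases ha : a = x0
    · simp only [M, Matrix.of_apply, ha, if_true, Q, hσ0, D_one, hNdef, hd]
    · simp only [M, Matrix.of_apply, ha, if_false, hτ0, D_one, hNdef, hcf a x ha]
  have hev : {s : ℝ | (M s).det ≠ 0} ∈ nhds (0 : ℝ) :=
    hMc.continuousAt.eventually_ne (by rw [hM0]; exact hN)
  have hpos : ∀ w : List (Fin n), ∀ a ∈ w.flatMap h, 0 < a := by
    intro w a ha
    obtain ⟨i, -, hi⟩ := List.mem_flatMap.1 ha
    exact hA a (hh i a hi)
  apply WP_inj _ _ (hpos _) (hpos _)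
  apply Polynomial.eq_of_infinite_eval_eq
  refine ((infinite_of_mem_nhds 0 hev).image Real.exp_injective.injOn).mono ?_
  rintro _ ⟨s, hs, rfl⟩
  have hs' : (M s).det ≠ 0 := hs
  have hort : ∀ p q : List (Fin n), p.flatMap g = q.flatMap g → ∀ a, a ≠ x0 →
      ∑ x, M s a x * Q s p q x = 0 := by
    intro p q hpq a ha
    have := dot_sum (τ s) (fun i => if i = a then 1 else 0) (σ s) f (hστ s) p q (hK p q hpq)
    simpa only [M, Matrix.of_apply, ha, if_false] using this
  have hfin := lin2 (M s) hs' x0 (Q s u v) (Q s u' v')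
    (fun x => D (fun _ => Real.exp s) (fun a : ℕ => (a : ℝ)) (h x))
    (fun x => by simp [M]) (hort u v hgu) (hort u' v' hg')
    (dot_sum _ _ (σ s) h (hσh s) u v hhu)
  simp only [Q, mul_sub, Finset.sum_sub_distrib] at hfin
  rw [← D_sum (σ s) (fun x => D (fun _ => Real.exp s) (fun a : ℕ => (a : ℝ)) (h x)),
    ← D_sum (σ s) (fun x => D (fun _ => Real.exp s) (fun a : ℕ => (a : ℝ)) (h x)),
    ← D_flatMap _ _ (σ s) h (hσh s), ← D_flatMap _ _ (σ s) h (hσh s)] at hfin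
  simp only [Set.mem_setOf_eq, WP_eval]
  exact sub_eq_zero.1 hfin

end CEB

/-- If `g, h : Ξ* → Σ*` are morphisms of rank `n − 1` whose entire systems `K_g` and `K_h`
differ, then every word equation satisfied by both `g` and `h` is balanced. -/
theorem common_equations_balanced {n : ℕ}
    (A : Finset ℕ) (hA : ∀ a ∈ A, 0 < a)
    (g h : Fin n → List ℕ) (hg : IntoAlph A g) (hh : IntoAlph A h)
    (hrg : mRank g = n - 1) (hrh : mRank h = n - 1)
    (hK : {e : List (Fin n) × List (Fin n) | mApply g e.1 = mApply g e.2}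
        ≠ {e : List (Fin n) × List (Fin n) | mApply h e.1 = mApply h e.2}) :
    ∀ u v : List (Fin n), mApply g u = mApply g v → mApply h u = mApply h v →
      ∀ x : Fin n, u.count x = v.count x := by
  intro u v hgu hhu x
  by_contra hx
  apply hK
  ext ⟨p, q⟩
  exact ⟨fun hpq => CEB.sub A hA g h hh hrg u v hgu hhu ⟨x, hx⟩ p q hpq,
    fun hpq => CEB.sub A hA h g hg hrh u v hhu hgu ⟨x, hx⟩ p q hpq⟩
end
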